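/- Let N, K be positive integers with K ≥ N. Define v[n] = 1/√N for 0 ≤ n ≤ N−1 and v[n] = 0 otherwise, and w[n] = 1/√N for 1−K ≤ n ≤ 0 and w[n] = 0 otherwise. Then for every integer x with 0 ≤ x ≤ K−N and every integer y: A_{v,w}(x,y) = 0 whenever y is not a multiple of N, and A_{v,w}(x,y) = 1 whenever y is a multiple of N. -/

import Mathlib

/-!
Translating the rectangular window `v` by `0 ≤ x ≤ K - N` keeps it inside the set where `n ↦ w[-n]`
is constant. There the crossambiguity function is `1/N` times a sum of the character
`n ↦ exp(2πiyn/N)` over `N` consecutive integers, and orthogonality of the characters of `ℤ/N`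
evaluates that sum.
-/

open Complex

/-- The crossambiguity function
`A_{v,w}(x,y) = ∑_{n∈ℤ} v[n−x]·w[−n]·exp(2πi y n/N)`. -/
noncomputable def crossamb (N : ℕ) (v w : ℤ → ℂ) (x y : ℤ) : ℂ :=
  ∑' n : ℤ, v (n - x) * w (-n) * Complex.exp (2 * Real.pi * Complex.I * (y : ℂ) * (n : ℂ) / N)

lemma sum_Ico_add_natCast_zpow {F : Type*} [DivisionRing F] {z : F} (hz : z ≠ 0) (m : ℤ) (N : ℕ) :
    ∑ n ∈ Finset.Ico m (m + N), z ^ n = z ^ m * ∑ k ∈ Finset.range N, z ^ k := by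
  simp [Int.Ico_eq_finset_map, zpow_add₀ hz, Finset.mul_sum]

lemma sum_Ico_zpow_of_pow_eq_one {F : Type*} [DivisionRing F] [DecidableEq F] {z : F} {N : ℕ}
    (hN : N ≠ 0) (hz : z ^ N = 1) (m : ℤ) :
    ∑ n ∈ Finset.Ico m (m + N), z ^ n = if z = 1 then (N : F) else 0 := by
  split_ifs with h
  · simp [h]
  · have hz0 : z ≠ 0 := (IsUnit.of_pow_eq_one hz hN).ne_zero
    rw [sum_Ico_add_natCast_zpow hz0, geom_sum_eq h, hz, sub_self, zero_div, mul_zero]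

lemma exp_two_pi_I_mul_intCast_div (N : ℕ) (y : ℤ) :
    exp (2 * Real.pi * I * y / N) = exp (2 * Real.pi * I / N) ^ y := by
  rw [← exp_int_mul]
  congr 1
  ring

lemma exp_two_pi_I_mul_intCast_div_pow {N : ℕ} (hN : N ≠ 0) (y : ℤ) :
    exp (2 * Real.pi * I * y / N) ^ N = 1 := by
  rw [exp_two_pi_I_mul_intCast_div, ← zpow_natCast, zpow_comm, zpow_natCast,
    (isPrimitiveRoot_exp N hN).pow_eq_one, one_zpow]

lemma exp_two_pi_I_mul_intCast_div_eq_one_iff {N : ℕ} (hN : N ≠ 0) (y : ℤ) :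
    exp (2 * Real.pi * I * y / N) = 1 ↔ (N : ℤ) ∣ y := by
  rw [exp_two_pi_I_mul_intCast_div, (isPrimitiveRoot_exp N hN).zpow_eq_one_iff_dvd]

lemma sum_Ico_exp_two_pi_I_mul_div {N : ℕ} (hN : N ≠ 0) (m y : ℤ) :
    ∑ n ∈ Finset.Ico m (m + N), exp (2 * Real.pi * I * y * n / N) =
      if (N : ℤ) ∣ y then (N : ℂ) else 0 := by
  have hpow (n : ℤ) : exp (2 * Real.pi * I * y * n / N) = exp (2 * Real.pi * I * y / N) ^ n := by
    rw [← exp_int_mul]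
    congr 1
    ring
  simp only [hpow, sum_Ico_zpow_of_pow_eq_one hN (exp_two_pi_I_mul_intCast_div_pow hN y),
    exp_two_pi_I_mul_intCast_div_eq_one_iff hN]

lemma crossamb_eq_sum_Ico_of_support_subset {v : ℤ → ℂ} {a b : ℤ}
    (hv : v.support ⊆ Set.Ico a b) (N : ℕ) (w : ℤ → ℂ) (x y : ℤ) :
    crossamb N v w x y =
      ∑ n ∈ Finset.Ico (a + x) (b + x),
        v (n - x) * w (-n) * exp (2 * Real.pi * I * y * n / N) := by
  refine tsum_eq_sum fun n hn ↦ ?_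
  have hvn : v (n - x) = 0 := by
    refine Function.notMem_support.mp fun hmem ↦ hn ?_
    obtain ⟨han, hnb⟩ := hv hmem
    exact Finset.mem_Ico.mpr (by omega)
  rw [hvn, zero_mul, zero_mul]

lemma crossamb_indicator_Ico {N : ℕ} (hN : N ≠ 0) {w : ℤ → ℂ} (a : ℂ) {b : ℂ} {m x : ℤ}
    (hw : ∀ n ∈ Set.Ico (m + x) (m + x + N), w (-n) = b) (y : ℤ) :
    crossamb N ((Set.Ico m (m + N)).indicator fun _ ↦ a) w x y =
      if (N : ℤ) ∣ y then a * b * N else 0 := by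
  rw [crossamb_eq_sum_Ico_of_support_subset Set.support_indicator_subset, add_right_comm m]
  calc
    _ = ∑ n ∈ Finset.Ico (m + x) (m + x + N),
          a * b * exp (2 * Real.pi * I * y * n / N) := by
      refine Finset.sum_congr rfl fun n hn ↦ ?_
      rw [Finset.mem_Ico] at hn
      rw [hw n hn, Set.indicator_of_mem (Set.mem_Ico.mpr (by omega))]
    _ = if (N : ℤ) ∣ y then a * b * N else 0 := by
      rw [← Finset.mul_sum, sum_Ico_exp_two_pi_I_mul_div hN, mul_ite, mul_zero]

/-- For the zero-padding scheme, with `v[n] = 1/√N` for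
`0 ≤ n ≤ N−1` (`0` otherwise) and `w[n] = 1/√N` for `1−K ≤ n ≤ 0`
(`0` otherwise), for every integer `x` with `0 ≤ x ≤ K−N` and every integer `y`:
`A_{v,w}(x,y) = 0` whenever `y` is not a multiple of `N`, and
`A_{v,w}(x,y) = 1` whenever `y` is a multiple of `N`. -/
theorem stmt13
    (N K : ℕ) (hN : 0 < N) (hNK : N ≤ K)
    (v : ℤ → ℂ)
    (hv : ∀ n : ℤ, v n = if 0 ≤ n ∧ n ≤ (N : ℤ) - 1 then ((1 / Real.sqrt N : ℝ) : ℂ) else 0)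
    (w : ℤ → ℂ)
    (hw : ∀ n : ℤ, w n = if 1 - (K : ℤ) ≤ n ∧ n ≤ 0 then ((1 / Real.sqrt N : ℝ) : ℂ) else 0) :
    ∀ x y : ℤ, 0 ≤ x → x ≤ (K : ℤ) - N →
      (¬ (N : ℤ) ∣ y → crossamb N v w x y = 0) ∧
        ((N : ℤ) ∣ y → crossamb N v w x y = 1) := by
  intro x y hx hxK
  have hv_window : v = (Set.Ico 0 (0 + (N : ℤ))).indicator fun _ ↦ ((1 / √N : ℝ) : ℂ) := by
    funext n
    simp only [hv, Set.indicator_apply, Set.mem_Ico, zero_add, Int.le_sub_one_iff]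
  have hw_const : ∀ n ∈ Set.Ico (0 + x) (0 + x + N), w (-n) = ((1 / √N : ℝ) : ℂ) := by
    rintro n ⟨hxn, hnx⟩
    rw [hw, if_pos (by omega)]
  have h_normalized : ((1 / √N : ℝ) : ℂ) * ((1 / √N : ℝ) : ℂ) * N = 1 := by
    have hN' : (N : ℝ) ≠ 0 := by positivity
    norm_cast
    rw [div_mul_div_comm, Real.mul_self_sqrt N.cast_nonneg, one_mul, one_div_mul_cancel hN']
  rw [hv_window, crossamb_indicator_Ico hN.ne' _ hw_const, h_normalized]
  exact ⟨fun hy ↦ if_neg hy, fun hy ↦ if_pos hy⟩
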